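/- arXiv:math/0412174 — 2 statements merged into one kernel-verified Lean document; each statement's English description precedes it below -/
import Mathlib

section
/- (Journé's Lemma in the plane.) For all $\epsilon > 0$ there is a constant $C_\epsilon$ with the following property. Let $\mathcal{U}$ be a collection of dyadic rectangles in $\mathbb{R}^2$ whose union $\operatorname{sh}(\mathcal{U})$ has finite measure, and set $V = \{M\mathbf{1}_{\operatorname{sh}(\mathcal{U})} > 1/2\}$ where $M$ is the strong maximal function. For $R = R_{(1)} \times R_{(2)} \in \mathcal{U}$ define $\operatorname{emb}(R;\mathcal{U}) = \sup\{\mu \ge 1 : (\mu R_{(1)}) \times R_{(2)} \subset V\}$. Then for every subcollection $\mathcal{U}' \subset \mathcal{U}$ of pairwise incomparable dyadic rectangles, $\sum_{R \in \mathcal{U}'} \operatorname{emb}(R;\mathcal{U})^{-\epsilon} |R| \le C_\epsilon |\operatorname{sh}(\mathcal{U}')|$. -/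
open MeasureTheory Set

noncomputable section

/-- The dyadic interval `[j2^k, (j+1)2^k)`. -/
def dI (j k : ℤ) : Set ℝ := Set.Ico ((j:ℝ) * 2 ^ k) (((j:ℝ) + 1) * 2 ^ k)

/-- The concentric dilate by `μ` of the dyadic interval `[j2^k, (j+1)2^k)`. -/
def dilI (μ : ℝ) (j k : ℤ) : Set ℝ :=
  Set.Ico (((j:ℝ) + 1/2) * 2 ^ k - μ * 2 ^ k / 2) (((j:ℝ) + 1/2) * 2 ^ k + μ * 2 ^ k / 2)

/-- A dyadic rectangle in the plane, encoded by the data `((j₁,k₁),(j₂,k₂))` of its sides. -/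
abbrev Rect2 := (ℤ × ℤ) × (ℤ × ℤ)

/-- The dyadic rectangle of the plane associated to the data `R`. -/
def rect (R : Rect2) : Set (ℝ × ℝ) := dI R.1.1 R.1.2 ×ˢ dI R.2.1 R.2.2

/-- The dilate of `rect R` by `(μ, 1)`: only the first coordinate is expanded. -/
def rectDil1 (μ : ℝ) (R : Rect2) : Set (ℝ × ℝ) := dilI μ R.1.1 R.1.2 ×ˢ dI R.2.1 R.2.2

/-- The concentric dilate of `rect R` by `μ` in both coordinates. -/
def rectDil (μ : ℝ) (R : Rect2) : Set (ℝ × ℝ) := dilI μ R.1.1 R.1.2 ×ˢ dilI μ R.2.1 R.2.2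

/-- The shadow `⋃_{R ∈ 𝓤} R` of a collection of dyadic rectangles. -/
def sh (𝓤 : Set Rect2) : Set (ℝ × ℝ) := ⋃ R ∈ 𝓤, rect R

/-- The superlevel set `{M 1_S > t}` of the strong maximal function of an indicator in the
plane: points contained in some axis-parallel rectangle `Q` with `|S ∩ Q| > t|Q|`. -/
def maxGT (t : ENNReal) (S : Set (ℝ × ℝ)) : Set (ℝ × ℝ) :=
  {x | ∃ a b c d : ℝ, x ∈ Set.Ioo a b ×ˢ Set.Ioo c d ∧
    t * volume (Set.Ioo a b ×ˢ Set.Ioo c d) < volume (S ∩ Set.Ioo a b ×ˢ Set.Ioo c d)}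

/-- `emb(R; 𝓤)`: the supremum of those `μ ≥ 1` with `(μ R₍₁₎) × R₍₂₎ ⊆ {M 1_{sh 𝓤} > 1/2}`. -/
def emb (𝓤 : Set Rect2) (R : Rect2) : ℝ :=
  sSup {μ : ℝ | 1 ≤ μ ∧ rectDil1 μ R ⊆ maxGT (1/2) (sh 𝓤)}

lemma two_zpow_split {k k' : ℤ} (h : k ≤ k') : ∃ m : ℕ, (2:ℝ) ^ k' = (((2:ℤ) ^ m : ℤ) : ℝ) * 2 ^ k := by
  obtain ⟨m, hm⟩ := Int.le.dest h
  refine ⟨m, ?_⟩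
  rw [← hm, zpow_add₀ (by norm_num)]
  push_cast
  rw [zpow_natCast]; ring

lemma dI_subset {j k j' k' : ℤ} {x : ℝ} (h : k ≤ k') (hx : x ∈ dI j k) (hx' : x ∈ dI j' k') :
    dI j k ⊆ dI j' k' := by
  obtain ⟨m, hm⟩ := two_zpow_split h
  have hp : (0:ℝ) < 2 ^ k := by positivity
  simp only [dI, mem_Ico, hm] at hx hx' ⊢
  obtain ⟨h1, h2⟩ := hx
  obtain ⟨h3, h4⟩ := hx'
  have a1 : j' * 2 ^ m < j + 1 := by
    have : ((j' : ℝ) * ((2 ^ m : ℤ) : ℝ)) * 2 ^ k < ((j:ℝ) + 1) * 2 ^ k := by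
      calc _ = (j':ℝ) * (((2 ^ m : ℤ) : ℝ) * 2 ^ k) := by ring
        _ ≤ x := h3
        _ < _ := h2
    have := lt_of_mul_lt_mul_right this hp.le
    exact_mod_cast this
  have a2 : j < (j' + 1) * 2 ^ m := by
    have : (j:ℝ) * 2 ^ k < (((j':ℝ) + 1) * ((2 ^ m : ℤ) : ℝ)) * 2 ^ k := by
      calc _ ≤ x := h1
        _ < _ := h4
        _ = _ := by ring
    have := lt_of_mul_lt_mul_right this hp.le
    exact_mod_cast this
  have b1 : (j' : ℝ) * ((2 ^ m : ℤ) : ℝ) ≤ j := by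
    have : j' * 2 ^ m ≤ j := by linarith
    exact_mod_cast this
  have b2 : (j:ℝ) + 1 ≤ ((j':ℝ) + 1) * ((2 ^ m : ℤ) : ℝ) := by
    have : j + 1 ≤ (j' + 1) * 2 ^ m := by linarith
    exact_mod_cast this
  rintro y ⟨hy1, hy2⟩
  constructor
  · have := mul_le_mul_of_nonneg_right b1 hp.le
    nlinarith
  · have := mul_le_mul_of_nonneg_right b2 hp.le
    nlinarith

lemma dI_meas (j k : ℤ) : MeasurableSet (dI j k) := measurableSet_Ico

lemma rect_meas (R : Rect2) : MeasurableSet (rect R) := (dI_meas _ _).prod (dI_meas _ _)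

lemma vol_dI (j k : ℤ) : volume (dI j k) = ENNReal.ofReal (2 ^ k) := by
  rw [dI, Real.volume_Ico]; congr 1; ring

lemma vol_rect (R : Rect2) : volume (rect R) = ENNReal.ofReal (2 ^ R.1.2 * 2 ^ R.2.2) := by
  rw [rect, Measure.volume_eq_prod, Measure.prod_prod, vol_dI, vol_dI,
    ENNReal.ofReal_mul (by positivity)]

lemma vol_Ioo_prod (a b c d : ℝ) (h : a ≤ b) :
    volume (Ioo a b ×ˢ Ioo c d) = ENNReal.ofReal ((b - a) * (d - c)) := by
  rw [Measure.volume_eq_prod, Measure.prod_prod, Real.volume_Ioo, Real.volume_Ioo,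
    ENNReal.ofReal_mul (by linarith)]

lemma half_ofReal (x : ℝ) : (1/2 : ENNReal) * ENNReal.ofReal x = ENNReal.ofReal (x / 2) := by
  rw [show (1/2 : ENNReal) = ENNReal.ofReal (1/2) by
    rw [ENNReal.ofReal_div_of_pos (by norm_num)]; simp, ← ENNReal.ofReal_mul (by norm_num)]
  congr 1; ring

/-- the geometric core -/
lemma core (S : Set (ℝ × ℝ)) (R : Rect2) (n : ℕ) (j k : ℤ) (F : Set ℝ)
    (hk : R.1.2 + n + 3 ≤ k) (hI : dI R.1.1 R.1.2 ⊆ dI j k) (hF : F ⊆ dI R.2.1 R.2.2)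
    (hS : dI j k ×ˢ F ⊆ S) (hv : ENNReal.ofReal (3/4 * 2 ^ R.2.2) ≤ volume F) :
    rectDil1 (2 ^ (n+1)) R ⊆ maxGT (1/2) S := by
  obtain ⟨⟨j1, k1⟩, ⟨j2, k2⟩⟩ := R
  simp only at *
  have p1 : (0:ℝ) < 2 ^ k1 := by positivity
  have p2 : (0:ℝ) < 2 ^ k2 := by positivity
  have p3 : (0:ℝ) < 2 ^ k := by positivity
  have hkk : (2:ℝ) ^ n * 2 ^ k1 * 8 ≤ 2 ^ k := by
    calc (2:ℝ) ^ n * 2 ^ k1 * 8 = 2 ^ (k1 + n + 3) := by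
          rw [zpow_add₀ (by norm_num), zpow_add₀ (by norm_num), zpow_natCast]; norm_num; ring
      _ ≤ 2 ^ k := zpow_le_zpow_right₀ (by norm_num) hk
  have hc : ((j1:ℝ) + 1/2) * 2 ^ k1 ∈ dI j k := hI ⟨by nlinarith, by nlinarith⟩
  rintro ⟨x, y⟩ ⟨hx, hy⟩
  simp only [dilI, dI, mem_Ico] at hx hy hc
  rw [pow_succ] at hx
  set A := (j:ℝ) * 2 ^ k with hA
  set B := (j2:ℝ) * 2 ^ k2 with hB
  have hA' : ((j:ℝ) + 1) * 2 ^ k = A + 2 ^ k := by rw [hA]; ring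
  have hB' : ((j2:ℝ) + 1) * 2 ^ k2 = B + 2 ^ k2 := by rw [hB]; ring
  rw [hA'] at hc
  rw [hB'] at hy
  refine ⟨A - 2 ^ k / 8 - 2^k/1000, A + 2 ^ k + 2 ^ k / 8, B - 2 ^ k2 / 10, B + 2 ^ k2, ?_, ?_⟩
  · refine ⟨⟨?_, ?_⟩, ⟨?_, ?_⟩⟩ <;> simp only <;> linarith [hx.1, hx.2, hy.1, hy.2, hc.1, hc.2]
  · rw [vol_Ioo_prod _ _ _ _ (by linarith), half_ofReal]
    have hsub : Ioo A (A + 2^k) ×ˢ (F \ {B}) ⊆ S ∩ Ioo (A - 2 ^ k / 8 - 2^k/1000) (A + 2 ^ k + 2 ^ k / 8) ×ˢ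
        Ioo (B - 2 ^ k2 / 10) (B + 2 ^ k2) := by
      rintro ⟨u, v⟩ ⟨hu, hv⟩
      have hv2 := hF hv.1
      simp only [dI, mem_Ico, hB', ← hB] at hv2
      simp only [mem_Ioo] at hu
      refine ⟨hS ⟨?_, hv.1⟩, ⟨?_, ?_⟩, ⟨?_, ?_⟩⟩
      · simp only [dI, mem_Ico, hA', ← hA]; exact ⟨hu.1.le, hu.2⟩
      all_goals simp only
      all_goals linarith [hu.1, hu.2, hv2.1, hv2.2]
    refine lt_of_lt_of_le ?_ (measure_mono hsub)
    rw [Measure.volume_eq_prod, Measure.prod_prod, Real.volume_Ioo,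
      measure_sdiff_null (by simp)]
    refine lt_of_lt_of_le ?_ (mul_le_mul_right hv _)
    rw [← ENNReal.ofReal_mul (by linarith)]
    refine (ENNReal.ofReal_lt_ofReal_iff (by nlinarith [mul_pos p3 p2])).2 ?_
    nlinarith [mul_pos p3 p2]

lemma key (n : ℕ) (𝓤 𝓤' : Set Rect2) (hfin : volume (sh 𝓤) < ⊤) (hsub : 𝓤' ⊆ 𝓤)
    (hinc : ∀ R ∈ 𝓤', ∀ R' ∈ 𝓤', R ≠ R' → ¬ rect R ⊆ rect R')
    (T : Finset Rect2) (hT : ∀ R ∈ T, R ∈ 𝓤')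
    (hV : ∀ R ∈ T, ¬ rectDil1 (2 ^ (n+1)) R ⊆ maxGT (1/2) (sh 𝓤))
    (hsep : ∀ R ∈ T, ∀ R' ∈ T, R.1.2 < R'.1.2 → R.1.2 + n + 3 ≤ R'.1.2) :
    ∑ R ∈ T, (volume (rect R)).toReal ≤ 4 * (volume (sh 𝓤')).toReal := by
  classical
  let L : Rect2 → Finset Rect2 := fun R => T.filter fun R' => R.1.2 < R'.1.2 ∧ (rect R ∩ rect R').Nonempty
  let F : Rect2 → Set ℝ := fun R => ⋃ R' ∈ L R, dI R'.2.1 R'.2.2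
  let E : Rect2 → Set (ℝ × ℝ) := fun R => dI R.1.1 R.1.2 ×ˢ (dI R.2.1 R.2.2 \ F R)
  have hFm : ∀ R, MeasurableSet (F R) := fun R =>
    Finset.measurableSet_biUnion _ fun R' _ => dI_meas _ _
  have hEm : ∀ R, MeasurableSet (E R) := fun R => (dI_meas _ _).prod ((dI_meas _ _).diff (hFm R))
  have hL1 : ∀ R ∈ T, ∀ R' ∈ L R, dI R.1.1 R.1.2 ⊆ dI R'.1.1 R'.1.2 := by
    intro R hR R' hR'
    obtain ⟨h1, h2, z, hz, hz'⟩ := Finset.mem_filter.1 hR'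
    exact dI_subset h2.le hz.1 hz'.1
  have hL2 : ∀ R ∈ T, ∀ R' ∈ L R, dI R'.2.1 R'.2.2 ⊆ dI R.2.1 R.2.2 := by
    intro R hR R' hR'
    have hs := hL1 R hR R' hR'
    obtain ⟨h1, h2, z, hz, hz'⟩ := Finset.mem_filter.1 hR'
    rcases le_total R'.2.2 R.2.2 with h | h
    · exact dI_subset h hz'.2 hz.2
    · exact absurd (prod_mono hs (dI_subset h hz.2 hz'.2))
        (hinc R (hT R hR) R' (hT R' h1) (by rintro rfl; exact lt_irrefl _ h2))
  have hFs : ∀ R ∈ T, F R ⊆ dI R.2.1 R.2.2 := fun R hR => iUnion₂_subset (hL2 R hR)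
  have hFv : ∀ R ∈ T, volume (F R) ≤ ENNReal.ofReal (3/4 * 2 ^ R.2.2) := by
    intro R hR
    by_contra hcon
    push Not at hcon
    have hne : (L R).Nonempty := by
      rw [Finset.nonempty_iff_ne_empty]
      intro h
      simp [F, h] at hcon
    obtain ⟨Q, hQ, hmin⟩ := Finset.exists_min_image (L R) (fun R' => R'.1.2) hne
    have hQT := Finset.mem_filter.1 hQ
    refine hV R hR (core _ R n Q.1.1 Q.1.2 (F R) (hsep R hR Q hQT.1 hQT.2.1) (hL1 R hR Q hQ)
      (hFs R hR) ?_ hcon.le)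
    rintro ⟨u, v⟩ ⟨hu, hv⟩
    simp only [F, mem_iUnion] at hv
    obtain ⟨R', hR', hv⟩ := hv
    refine mem_iUnion₂.2 ⟨R', hsub (hT R' (Finset.mem_filter.1 hR').1), ?_, hv⟩
    obtain ⟨z, hz, -⟩ := hQT.2.2
    exact dI_subset (hmin R' hR') (hL1 R hR Q hQ hz.1) (hL1 R hR R' hR' hz.1) hu
  have hEr : ∀ R, E R ⊆ rect R := fun R => prod_mono le_rfl sdiff_subset
  have hEv : ∀ R ∈ T, (volume (rect R)).toReal ≤ 4 * volume.real (E R) := by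
    intro R hR
    have p1 : (0:ℝ) < 2 ^ R.1.2 := by positivity
    have p2 : (0:ℝ) < 2 ^ R.2.2 := by positivity
    have hFr : volume.real (F R) ≤ 3/4 * 2 ^ R.2.2 :=
      ENNReal.toReal_le_of_le_ofReal (by positivity) (hFv R hR)
    have hd : volume.real (dI R.2.1 R.2.2 \ F R) = 2 ^ R.2.2 - volume.real (F R) := by
      rw [measureReal_sdiff (hFs R hR) (hFm R) (by rw [vol_dI]; exact ENNReal.ofReal_ne_top)]
      congr 1
      rw [measureReal_def, vol_dI, ENNReal.toReal_ofReal p2.le]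
    have he : volume.real (E R) = 2 ^ R.1.2 * (2 ^ R.2.2 - volume.real (F R)) := by
      rw [← hd, Measure.volume_eq_prod, measureReal_prod_prod]
      congr 1
      rw [measureReal_def, vol_dI, ENNReal.toReal_ofReal p1.le]
    rw [he, vol_rect, ENNReal.toReal_ofReal (by positivity)]
    nlinarith
  have hlt : ∀ R ∈ T, ∀ R' ∈ T, R ≠ R' → R.1.2 ≤ R'.1.2 → Disjoint (E R) (E R') := by
    intro R hR R' hR' hne hle
    rw [Set.disjoint_left]
    intro z hz hz'
    rcases hle.lt_or_eq with h | h
    · apply hz.2.2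
      exact mem_iUnion₂.2 ⟨R', Finset.mem_filter.2 ⟨hR', h, z, hEr _ hz, hEr _ hz'⟩, hz'.2.1⟩
    · rcases le_total R.2.2 R'.2.2 with h2 | h2
      · exact hinc R (hT R hR) R' (hT R' hR') hne
          (prod_mono (dI_subset hle hz.1 hz'.1) (dI_subset h2 hz.2.1 hz'.2.1))
      · exact hinc R' (hT R' hR') R (hT R hR) hne.symm
          (prod_mono (dI_subset h.ge hz'.1 hz.1) (dI_subset h2 hz'.2.1 hz.2.1))
  have hdisj : (T : Set Rect2).PairwiseDisjoint E := by
    intro R hR R' hR' hne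
    rcases le_total R.1.2 R'.1.2 with h | h
    · exact hlt R hR R' hR' hne h
    · exact (hlt R' hR' R hR hne.symm h).symm
  have hfin' : volume (sh 𝓤') < ⊤ :=
    lt_of_le_of_lt (measure_mono (biUnion_subset_biUnion_left hsub)) hfin
  calc ∑ R ∈ T, (volume (rect R)).toReal ≤ ∑ R ∈ T, 4 * volume.real (E R) := Finset.sum_le_sum hEv
    _ = 4 * volume.real (⋃ R ∈ T, E R) := by
      rw [← Finset.mul_sum, measureReal_biUnion_finset hdisj (fun R _ => hEm R)
        (fun R _ => ne_top_of_le_ne_top (by rw [vol_rect]; exact ENNReal.ofReal_ne_top)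
          (measure_mono (hEr R)))]
    _ ≤ _ := by
      refine mul_le_mul_of_nonneg_left (ENNReal.toReal_mono hfin'.ne (measure_mono ?_)) (by norm_num)
      exact iUnion₂_subset fun R hR => (hEr R).trans (subset_biUnion_of_mem (u := rect) (hT R hR))

lemma key2 (n : ℕ) (𝓤 𝓤' : Set Rect2) (hfin : volume (sh 𝓤) < ⊤) (hsub : 𝓤' ⊆ 𝓤)
    (hinc : ∀ R ∈ 𝓤', ∀ R' ∈ 𝓤', R ≠ R' → ¬ rect R ⊆ rect R')
    (T : Finset Rect2) (hT : ∀ R ∈ T, R ∈ 𝓤')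
    (hV : ∀ R ∈ T, ¬ rectDil1 (2 ^ (n+1)) R ⊆ maxGT (1/2) (sh 𝓤)) :
    ∑ R ∈ T, (volume (rect R)).toReal ≤ (n + 3) * (4 * (volume (sh 𝓤')).toReal) := by
  classical
  have hpos : (0:ℤ) < n + 3 := by positivity
  have hm : ∀ R ∈ T, R.1.2 % (n + 3 : ℤ) ∈ Finset.Ico (0:ℤ) (n+3) := fun R _ =>
    Finset.mem_Ico.2 ⟨Int.emod_nonneg _ hpos.ne', Int.emod_lt_of_pos _ hpos⟩
  rw [← Finset.sum_fiberwise_of_maps_to hm]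
  refine (Finset.sum_le_card_nsmul _ _ (4 * (volume (sh 𝓤')).toReal) ?_).trans ?_
  · intro r _
    refine key n 𝓤 𝓤' hfin hsub hinc _ (fun R hR => hT R (Finset.mem_filter.1 hR).1)
      (fun R hR => hV R (Finset.mem_filter.1 hR).1) ?_
    intro R hR R' hR' hlt
    have h : R.1.2 ≡ R'.1.2 [ZMOD (n+3)] :=
      (Finset.mem_filter.1 hR).2.trans (Finset.mem_filter.1 hR').2.symm
    have := Int.le_of_dvd (by linarith) h.dvd
    linarith
  · rw [nsmul_eq_mul]
    apply le_of_eq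
    congr 1
    rw [Int.card_Ico]
    have : ((n:ℤ) + 3 - 0).toNat = n + 3 := by omega
    rw [this]; push_cast; ring

lemma one_mem (𝓤 : Set Rect2) (R : Rect2) (hR : R ∈ 𝓤) :
    rectDil1 1 R ⊆ maxGT (1/2) (sh 𝓤) := by
  have hd : rectDil1 1 R = rect R := by
    unfold rectDil1 rect dilI dI
    congr 2 <;> ring
  rw [hd]
  obtain ⟨⟨j1, k1⟩, ⟨j2, k2⟩⟩ := R
  have p1 : (0:ℝ) < 2 ^ k1 := by positivity
  have p2 : (0:ℝ) < 2 ^ k2 := by positivity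
  rintro ⟨x, y⟩ ⟨hx, hy⟩
  simp only [dI, mem_Ico] at hx hy
  refine ⟨j1 * 2 ^ k1 - 2 ^ k1 / 10, (j1 + 1) * 2 ^ k1, j2 * 2 ^ k2 - 2 ^ k2 / 10,
    (j2 + 1) * 2 ^ k2, ⟨⟨?_, hx.2⟩, ⟨?_, hy.2⟩⟩, ?_⟩
  · simp only; linarith
  · simp only; linarith
  · rw [vol_Ioo_prod _ _ _ _ (by nlinarith), half_ofReal]
    have hs : Ioo ((j1:ℝ) * 2 ^ k1) ((j1 + 1) * 2 ^ k1) ×ˢ Ioo ((j2:ℝ) * 2 ^ k2) ((j2 + 1) * 2 ^ k2) ⊆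
        sh 𝓤 ∩ Ioo ((j1:ℝ) * 2 ^ k1 - 2 ^ k1 / 10) ((j1 + 1) * 2 ^ k1) ×ˢ
          Ioo ((j2:ℝ) * 2 ^ k2 - 2 ^ k2 / 10) ((j2 + 1) * 2 ^ k2) := by
      rintro ⟨u, v⟩ ⟨hu, hv⟩
      refine ⟨mem_iUnion₂.2 ⟨_, hR, Ioo_subset_Ico_self hu, Ioo_subset_Ico_self hv⟩,
        ⟨?_, hu.2⟩, ⟨?_, hv.2⟩⟩
      · have := hu.1; simp only at this ⊢; linarith
      · have := hv.1; simp only at this ⊢; linarith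
    refine lt_of_lt_of_le ?_ (measure_mono hs)
    rw [vol_Ioo_prod _ _ _ _ (by nlinarith)]
    have := mul_pos p1 p2
    refine (ENNReal.ofReal_lt_ofReal_iff (by nlinarith)).2 ?_
    nlinarith

lemma emb_class (𝓤 : Set Rect2) (R : Rect2) (hR : R ∈ 𝓤) (h0 : emb 𝓤 R ≠ 0) :
    (2:ℝ) ^ (Nat.log 2 ⌊emb 𝓤 R⌋₊) ≤ emb 𝓤 R ∧
    ¬ rectDil1 (2 ^ (Nat.log 2 ⌊emb 𝓤 R⌋₊ + 1)) R ⊆ maxGT (1/2) (sh 𝓤) := by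
  have hb : BddAbove {μ : ℝ | 1 ≤ μ ∧ rectDil1 μ R ⊆ maxGT (1/2) (sh 𝓤)} := by
    by_contra h
    exact h0 (Real.sSup_of_not_bddAbove h)
  have h1 : 1 ≤ emb 𝓤 R := le_csSup hb ⟨le_rfl, one_mem 𝓤 R hR⟩
  have hf : ⌊emb 𝓤 R⌋₊ ≠ 0 := (Nat.floor_pos.2 h1).ne'
  constructor
  · have : ((2 ^ (Nat.log 2 ⌊emb 𝓤 R⌋₊) : ℕ) : ℝ) ≤ (⌊emb 𝓤 R⌋₊ : ℝ) :=
      Nat.cast_le.2 (Nat.pow_log_le_self 2 hf)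
    push_cast at this
    exact this.trans (Nat.floor_le (by linarith))
  · intro hs
    have h2 : (2:ℝ) ^ (Nat.log 2 ⌊emb 𝓤 R⌋₊ + 1) ≤ emb 𝓤 R :=
      le_csSup hb ⟨one_le_pow₀ (by norm_num), hs⟩
    have h3 : ⌊emb 𝓤 R⌋₊ < 2 ^ (Nat.log 2 ⌊emb 𝓤 R⌋₊ + 1) := Nat.lt_pow_succ_log_self (by norm_num) _
    have h4 := (Nat.floor_lt (by linarith)).1 h3
    push_cast at h4
    linarith

/-- Journé's Lemma in the plane: for every `ε > 0` there is `C_ε` such that for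
every collection `𝓤` of dyadic rectangles in the plane with shadow of finite measure and
every subcollection `𝓤' ⊆ 𝓤` of pairwise incomparable rectangles,
`∑_{R ∈ 𝓤'} emb(R;𝓤)^{-ε} |R| ≤ C_ε |sh 𝓤'|`. -/
theorem stmt_9 (ε : ℝ) (hε : 0 < ε) :
    ∃ C : ℝ, 0 < C ∧ ∀ 𝓤 : Set Rect2, volume (sh 𝓤) < ⊤ →
      ∀ 𝓤' ⊆ 𝓤, (∀ R ∈ 𝓤', ∀ R' ∈ 𝓤', R ≠ R' → ¬ rect R ⊆ rect R') →
      ∑' R : 𝓤', emb 𝓤 (R : Rect2) ^ (-ε) * (volume (rect (R : Rect2))).toReal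
        ≤ C * (volume (sh 𝓤')).toReal := by
  classical
  set q : ℝ := 2 ^ (-ε) with hq
  have hq0 : 0 < q := by positivity
  have hq1 : q < 1 := Real.rpow_lt_one_of_one_lt_of_neg (by norm_num) (by linarith)
  let c : ℕ → ℝ := fun n => q ^ n * ((n + 3) * 4)
  have hc0 : ∀ n, 0 ≤ c n := fun n => by positivity
  have hcs : Summable c := by
    have s1 : Summable fun n : ℕ => (n:ℝ) ^ 1 * q ^ n :=
      summable_pow_mul_geometric_of_norm_lt_one 1 (by rwa [Real.norm_of_nonneg hq0.le])
    have s2 : Summable fun n : ℕ => q ^ n := summable_geometric_of_lt_one hq0.le hq1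
    refine ((s1.mul_left 4).add (s2.mul_left 12)).congr fun n => ?_
    simp only [c]; ring
  have hts : 0 ≤ ∑' n, c n := tsum_nonneg hc0
  refine ⟨(∑' n, c n) + 1, by linarith, ?_⟩
  intro 𝓤 hfin 𝓤' hsub hinc
  set V := (volume (sh 𝓤')).toReal with hVdef
  have hV0 : 0 ≤ V := ENNReal.toReal_nonneg
  have hCV : 0 ≤ ((∑' n, c n) + 1) * V := mul_nonneg (by linarith) hV0
  by_cases hS : Summable fun R : 𝓤' => emb 𝓤 (R : Rect2) ^ (-ε) * (volume (rect (R : Rect2))).toReal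
  swap
  · rw [tsum_eq_zero_of_not_summable hS]; exact hCV
  refine hS.tsum_le_of_sum_le fun s => ?_
  let f : Rect2 → ℝ := fun R => emb 𝓤 R ^ (-ε) * (volume (rect R)).toReal
  let N : Rect2 → ℕ := fun R => Nat.log 2 ⌊emb 𝓤 R⌋₊
  let T := (s.map (Function.Embedding.subtype _)).filter fun R => emb 𝓤 R ≠ 0
  have hT : ∀ R ∈ T, R ∈ 𝓤' := by
    intro R hR
    obtain ⟨R', _, rfl⟩ := Finset.mem_map.1 (Finset.mem_filter.1 hR).1
    exact R'.2
  have h1 : ∑ R ∈ s, emb 𝓤 (R : Rect2) ^ (-ε) * (volume (rect (R : Rect2))).toReal = ∑ R ∈ T, f R := by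
    rw [Finset.sum_filter_of_ne, Finset.sum_map]
    · rfl
    · intro R _ hne h0
      apply hne
      simp only [f, h0]
      rw [Real.zero_rpow (by linarith), zero_mul]
  rw [h1, ← Finset.sum_fiberwise_of_maps_to (g := N) (t := T.image N)
    (fun R hR => Finset.mem_image_of_mem _ hR)]
  have h2 : ∀ n ∈ T.image N, ∑ R ∈ T with N R = n, f R ≤ c n * V := by
    intro n _
    have h3 : ∀ R ∈ T.filter (fun R => N R = n), f R ≤ q ^ n * (volume (rect R)).toReal := by
      intro R hR
      obtain ⟨hRT, rfl⟩ := Finset.mem_filter.1 hR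
      refine mul_le_mul_of_nonneg_right ?_ ENNReal.toReal_nonneg
      have he := (emb_class 𝓤 R (hsub (hT R hRT)) (Finset.mem_filter.1 hRT).2).1
      calc emb 𝓤 R ^ (-ε) ≤ ((2:ℝ) ^ N R) ^ (-ε) :=
            Real.rpow_le_rpow_of_nonpos (by positivity) he (by linarith)
        _ = q ^ N R := by
            rw [hq, ← Real.rpow_natCast, ← Real.rpow_natCast, ← Real.rpow_mul (by norm_num),
              ← Real.rpow_mul (by norm_num), mul_comm]
    refine (Finset.sum_le_sum h3).trans ?_
    rw [← Finset.mul_sum]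
    have := key2 n 𝓤 𝓤' hfin hsub hinc (T.filter (fun R => N R = n))
      (fun R hR => hT R (Finset.mem_filter.1 hR).1) (by
        intro R hR
        obtain ⟨hRT, rfl⟩ := Finset.mem_filter.1 hR
        exact (emb_class 𝓤 R (hsub (hT R hRT)) (Finset.mem_filter.1 hRT).2).2)
    calc _ ≤ q ^ n * ((n + 3) * (4 * V)) := mul_le_mul_of_nonneg_left this (by positivity)
      _ = c n * V := by simp only [c]; ring
  refine (Finset.sum_le_sum h2).trans ?_
  rw [← Finset.sum_mul]
  refine mul_le_mul_of_nonneg_right ?_ hV0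
  linarith [hcs.sum_le_tsum (T.image N) (fun n _ => hc0 n)]
end
end

section
/- (Pipher's covering lemma, key disjointness construction.) Let $d \ge 2$ and let $\mathcal{U}'$ be a collection of dyadic rectangles in $\mathbb{R}^d$, of the form $R = I \times R'$ with $I$ the first-coordinate dyadic interval. For each dyadic interval $I$, set $F(I) = \bigcup\{R \in \mathcal{U}' : R_{(1)} = I\}$ and $G(I) = \bigcup_{I \subsetneq I'} F(I')$, and set $H(I) = F(I) \setminus G(I)$. Suppose that for every $R \in \mathcal{U}'$ with $R_{(1)} = I$ one has $|R \cap G(I)| < \frac{3}{4}|R|$. Then (i) the sets $\{H(I)\}_{I \in \mathcal{D}}$ are pairwise disjoint; (ii) for every $R \in \mathcal{U}'$ with $R_{(1)} = I$, $|R \cap H(I)| \ge \frac{1}{4}|R|$; and (iii) $|F(I)| \le |\{M \mathbf{1}_{H(I)} \ge \frac{1}{4}\}| \le C_d |H(I)|$, where $M$ is the strong maximal function. -/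
open MeasureTheory Set

noncomputable section

/-- A dyadic rectangle in `ℝ^d`, encoded by the data `(j_i, k_i)` of its side in each
coordinate. -/
abbrev RectD (d : ℕ) := Fin d → ℤ × ℤ

/-- The dyadic rectangle of `ℝ^d` associated to the data `R`. -/
def rectD {d : ℕ} (R : RectD d) : Set (Fin d → ℝ) :=
  Set.univ.pi fun i => dI (R i).1 (R i).2

/-- The shadow `⋃_{R ∈ 𝓤} R` of a collection of dyadic rectangles in `ℝ^d`. -/
def shD {d : ℕ} (𝓤 : Set (RectD d)) : Set (Fin d → ℝ) := ⋃ R ∈ 𝓤, rectD R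

/-- `F(I) = ⋃ {R ∈ 𝓤' : R_{(i₀)} = I}`. -/
def Fset {d : ℕ} (𝓤' : Set (RectD d)) (i₀ : Fin d) (I : ℤ × ℤ) : Set (Fin d → ℝ) :=
  ⋃ R ∈ {R ∈ 𝓤' | R i₀ = I}, rectD R

/-- `G(I) = ⋃_{I ⊊ I'} F(I')`, union over dyadic intervals strictly containing `I`. -/
def Gset {d : ℕ} (𝓤' : Set (RectD d)) (i₀ : Fin d) (I : ℤ × ℤ) : Set (Fin d → ℝ) :=
  ⋃ I' : ℤ × ℤ, ⋃ (_ : dI I.1 I.2 ⊂ dI I'.1 I'.2), Fset 𝓤' i₀ I'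

/-- `H(I) = F(I) \ G(I)`. -/
def Hset {d : ℕ} (𝓤' : Set (RectD d)) (i₀ : Fin d) (I : ℤ × ℤ) : Set (Fin d → ℝ) :=
  Fset 𝓤' i₀ I \ Gset 𝓤' i₀ I

/-- The superlevel set `{M 1_S ≥ t}` of the strong maximal function of an indicator in
`ℝ^d`: points in some axis-parallel rectangle `Q` with `|S ∩ Q| ≥ t|Q|`. -/
def maxGEd {d : ℕ} (t : ENNReal) (S : Set (Fin d → ℝ)) : Set (Fin d → ℝ) :=
  {x | ∃ u v : Fin d → ℝ, x ∈ Set.univ.pi (fun i => Set.Ioo (u i) (v i)) ∧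
    t * volume (Set.univ.pi fun i => Set.Ioo (u i) (v i))
      ≤ volume (S ∩ Set.univ.pi fun i => Set.Ioo (u i) (v i))}

/-- A countable family of measurable sets of positive finite measure whose maximal operator is
of restricted weak type. -/
structure GoodB {X : Type*} [MeasurableSpace X] (μ : Measure X) (B : Set (Set X)) : Prop where
  cnt : B.Countable
  meas : ∀ Q ∈ B, MeasurableSet Q
  ne0 : ∀ Q ∈ B, μ Q ≠ 0
  netop : ∀ Q ∈ B, μ Q ≠ ⊤
  wt : ∀ t : ENNReal, t ≠ 0 → t ≠ ⊤ → ∃ C : ENNReal, C ≠ ⊤ ∧ ∀ S, MeasurableSet S →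
    μ (⋃ Q ∈ {Q ∈ B | t * μ Q ≤ μ (S ∩ Q)}, Q) ≤ C * μ S

lemma GoodB.transport {X Y : Type*} [MeasurableSpace X] [MeasurableSpace Y] {μ : Measure X}
    {ν : Measure Y} {B : Set (Set X)} (h : GoodB μ B) (e : Y ≃ᵐ X) (he : MeasurePreserving e ν μ)
    {B' : Set (Set Y)} (hB : B' ⊆ (fun Q => e ⁻¹' Q) '' B) : GoodB ν B' where
  cnt := (h.cnt.image _).mono hB
  meas := by
    intro Q hQ
    obtain ⟨P, hP, rfl⟩ := hB hQ
    exact e.measurable (h.meas P hP)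
  ne0 := by
    intro Q hQ
    obtain ⟨P, hP, rfl⟩ := hB hQ
    simpa [he.measure_preimage_equiv] using h.ne0 P hP
  netop := by
    intro Q hQ
    obtain ⟨P, hP, rfl⟩ := hB hQ
    simpa [he.measure_preimage_equiv] using h.netop P hP
  wt := by
    intro t h0 h1
    obtain ⟨C, hC, H⟩ := h.wt t h0 h1
    refine ⟨C, hC, fun S hS => ?_⟩
    have key : ∀ A : Set Y, ν A = μ (e.symm ⁻¹' A) := by
      intro A
      rw [← he.measure_preimage_equiv, ← preimage_comp]; simp
    have := H (e.symm ⁻¹' S) (e.symm.measurable hS)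
    rw [key S]
    refine le_trans ?_ this
    rw [← he.measure_preimage_equiv]
    apply measure_mono
    intro y hy
    simp only [mem_iUnion, mem_setOf_eq, exists_prop] at hy
    obtain ⟨Q, ⟨hQ, hle⟩, hyQ⟩ := hy
    obtain ⟨P, hP, rfl⟩ := hB hQ
    simp only [mem_preimage, mem_iUnion, mem_setOf_eq, exists_prop]
    refine ⟨P, ⟨hP, ?_⟩, hyQ⟩
    rw [key, key, preimage_inter] at hle
    simpa [← preimage_comp] using hle

lemma goodB_prod {X Y : Type*} [MeasurableSpace X] [MeasurableSpace Y] {μ : Measure X}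
    {ν : Measure Y} [SFinite μ] [SFinite ν] {B₁ : Set (Set X)} {B₂ : Set (Set Y)}
    (h₁ : GoodB μ B₁) (h₂ : GoodB ν B₂) :
    GoodB (μ.prod ν) (image2 (fun P Q => P ×ˢ Q) B₁ B₂) where
  cnt := h₁.cnt.image2 h₂.cnt _
  meas := by
    rintro _ ⟨P, hP, Q, hQ, rfl⟩
    exact (h₁.meas P hP).prod (h₂.meas Q hQ)
  ne0 := by
    rintro _ ⟨P, hP, Q, hQ, rfl⟩
    simpa using ⟨h₁.ne0 P hP, h₂.ne0 Q hQ⟩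
  netop := by
    rintro _ ⟨P, hP, Q, hQ, rfl⟩
    simpa using ENNReal.mul_ne_top (h₁.netop P hP) (h₂.netop Q hQ)
  wt := by
    intro t h0 h1
    have ht0 : t / 2 ≠ 0 := by simp [h0]
    have ht1 : t / 2 ≠ ⊤ := ENNReal.div_ne_top h1 (by simp)
    obtain ⟨C₁, hC₁, H₁⟩ := h₁.wt _ ht0 ht1
    obtain ⟨C₂, hC₂, H₂⟩ := h₂.wt _ ht0 ht1
    refine ⟨C₂ * C₁, ENNReal.mul_ne_top hC₂ hC₁, fun S hS => ?_⟩
    have mS : ∀ P ∈ B₁, Measurable fun y => μ ((fun x => (x, y)) ⁻¹' S ∩ P) := by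
      intro P hP
      have := measurable_measure_prodMk_right (μ := μ)
        (hS.inter ((h₁.meas P hP).prod MeasurableSet.univ))
      convert this using 3 with y
      ext x; simp
    set E₁ : Set (X × Y) := ⋃ P ∈ B₁, P ×ˢ {y | t / 2 * μ P ≤ μ ((fun x => (x, y)) ⁻¹' S ∩ P)}
      with hE₁
    have mE₁ : MeasurableSet E₁ := by
      refine MeasurableSet.biUnion h₁.cnt fun P hP => (h₁.meas P hP).prod ?_
      exact measurableSet_le measurable_const (mS P hP)
    have bE₁ : μ.prod ν E₁ ≤ C₁ * μ.prod ν S := by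
      rw [Measure.prod_apply_symm mE₁, Measure.prod_apply_symm hS, ← lintegral_const_mul' _ _ hC₁]
      refine lintegral_mono fun y => ?_
      refine le_trans (measure_mono ?_) (H₁ _ (measurable_prodMk_right hS))
      intro x hx
      simp only [hE₁, mem_preimage, mem_iUnion, mem_prod, mem_setOf_eq, exists_prop] at hx ⊢
      obtain ⟨P, hP, hxP, hy⟩ := hx
      exact ⟨P, ⟨hP, hy⟩, hxP⟩
    have mS₂ : ∀ Q ∈ B₂, Measurable fun x => ν (Prod.mk x ⁻¹' E₁ ∩ Q) := by
      intro Q hQ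
      have := measurable_measure_prodMk_left (ν := ν)
        (mE₁.inter (MeasurableSet.univ.prod (h₂.meas Q hQ)))
      convert this using 3 with y
      ext x; simp
    set E₂ : Set (X × Y) := ⋃ Q ∈ B₂, {x | t / 2 * ν Q ≤ ν (Prod.mk x ⁻¹' E₁ ∩ Q)} ×ˢ Q
      with hE₂
    have mE₂ : MeasurableSet E₂ := by
      refine MeasurableSet.biUnion h₂.cnt fun Q hQ => MeasurableSet.prod ?_ (h₂.meas Q hQ)
      exact measurableSet_le measurable_const (mS₂ Q hQ)
    have bE₂ : μ.prod ν E₂ ≤ C₂ * μ.prod ν E₁ := by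
      rw [Measure.prod_apply mE₂, Measure.prod_apply mE₁, ← lintegral_const_mul' _ _ hC₂]
      refine lintegral_mono fun x => ?_
      refine le_trans (measure_mono ?_) (H₂ _ (measurable_prodMk_left mE₁))
      intro y hy
      simp only [hE₂, mem_preimage, mem_iUnion, mem_prod, mem_setOf_eq, exists_prop] at hy ⊢
      obtain ⟨Q, hQ, hx, hyQ⟩ := hy
      exact ⟨Q, ⟨hQ, hx⟩, hyQ⟩
    have sub : (⋃ R ∈ {R ∈ image2 (fun P Q => P ×ˢ Q) B₁ B₂ |
        t * μ.prod ν R ≤ μ.prod ν (S ∩ R)}, R) ⊆ E₂ := by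
      refine iUnion₂_subset ?_
      rintro _ ⟨⟨P, hP, Q, hQ, rfl⟩, hle⟩ ⟨x, y⟩ ⟨hx, hy⟩
      simp only at hx hy
      simp only [hE₂, mem_iUnion, mem_prod, mem_setOf_eq, exists_prop]
      refine ⟨Q, hQ, ?_, hy⟩
      set A : Set Y := {y | t / 2 * μ P ≤ μ ((fun x => (x, y)) ⁻¹' S ∩ P)} with hA
      have mA : MeasurableSet A := measurableSet_le measurable_const (mS P hP)
      have hsub : A ∩ Q ⊆ Prod.mk x ⁻¹' E₁ ∩ Q := by
        rintro z ⟨hz, hzQ⟩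
        refine ⟨?_, hzQ⟩
        simp only [hE₁, mem_preimage, mem_iUnion, mem_prod, exists_prop]
        exact ⟨P, hP, hx, hz⟩
      refine le_trans ?_ (measure_mono hsub)
      have e1 : μ.prod ν (S ∩ P ×ˢ Q) ≤ μ P * ν (A ∩ Q) + t / 2 * μ P * ν Q := by
        rw [Measure.prod_apply_symm (hS.inter ((h₁.meas P hP).prod (h₂.meas Q hQ)))]
        calc ∫⁻ y, μ ((fun x => (x, y)) ⁻¹' (S ∩ P ×ˢ Q)) ∂ν
            ≤ ∫⁻ y, ((A ∩ Q).indicator (fun _ => μ P) y + Q.indicator (fun _ => t / 2 * μ P) y) ∂ν := by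
              refine lintegral_mono fun z => ?_
              by_cases hzQ : z ∈ Q
              · have e : (fun x => (x, z)) ⁻¹' (S ∩ P ×ˢ Q) = (fun x => (x, z)) ⁻¹' S ∩ P := by
                  ext x; simp [hzQ]
                rw [e]
                by_cases hzA : z ∈ A
                · simp only [indicator_of_mem (show z ∈ A ∩ Q from ⟨hzA, hzQ⟩)]
                  exact le_trans (measure_mono inter_subset_right) le_self_add
                · rw [indicator_of_mem hzQ]
                  refine le_trans ?_ le_add_self
                  exact (not_le.mp hzA).le
              · have e : (fun x => (x, z)) ⁻¹' (S ∩ P ×ˢ Q) = ∅ := by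
                  ext x; simp [hzQ]
                rw [e]; simp
          _ = μ P * ν (A ∩ Q) + t / 2 * μ P * ν Q := by
              rw [lintegral_add_left (measurable_const.indicator (mA.inter (h₂.meas Q hQ))),
                lintegral_indicator_const (mA.inter (h₂.meas Q hQ)),
                lintegral_indicator_const (h₂.meas Q hQ)]
      have e2 := hle.trans e1
      rw [Measure.prod_prod] at e2
      have e3 : t * (μ P * ν Q) = μ P * (t / 2 * ν Q) + t / 2 * μ P * ν Q := by
        conv_lhs => rw [← ENNReal.add_halves t]
        ring
      rw [e3] at e2
      have fin : t / 2 * μ P * ν Q ≠ ⊤ :=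
        ENNReal.mul_ne_top (ENNReal.mul_ne_top ht1 (h₁.netop P hP)) (h₂.netop Q hQ)
      have e4 := (ENNReal.add_le_add_iff_right fin).1 e2
      exact (ENNReal.mul_le_mul_iff_right (h₁.ne0 P hP) (h₁.netop P hP)).1 e4
    calc _ ≤ μ.prod ν E₂ := measure_mono sub
      _ ≤ C₂ * μ.prod ν E₁ := bE₂
      _ ≤ C₂ * (C₁ * μ.prod ν S) := by gcongr
      _ = _ := by rw [mul_assoc]

lemma goodB_one : GoodB (volume : Measure ℝ)
    (range fun p : {p : ℚ × ℚ // p.1 < p.2} => Ioo (p.1.1 : ℝ) (p.1.2 : ℝ)) where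
  cnt := countable_range _
  meas := by rintro _ ⟨p, rfl⟩; exact measurableSet_Ioo
  ne0 := by
    rintro _ ⟨p, rfl⟩
    have : (p.1.1 : ℝ) < p.1.2 := by exact_mod_cast p.2
    simpa using this
  netop := by rintro _ ⟨p, rfl⟩; simp
  wt := by
    intro t h0 h1
    refine ⟨5 / t, ENNReal.div_ne_top (by simp) h0, fun S hS => ?_⟩
    by_cases hSt : volume S = ⊤
    · rw [hSt, ENNReal.mul_top]
      · exact le_top
      · simp [h1]
    set T : Set {p : ℚ × ℚ // p.1 < p.2} := {p | t * volume (Ioo (p.1.1 : ℝ) (p.1.2 : ℝ)) ≤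
      volume (S ∩ Ioo (p.1.1 : ℝ) (p.1.2 : ℝ))} with hT
    let c : {p : ℚ × ℚ // p.1 < p.2} → ℝ := fun p => ((p.1.1 : ℝ) + p.1.2) / 2
    let r : {p : ℚ × ℚ // p.1 < p.2} → ℝ := fun p => ((p.1.2 : ℝ) - p.1.1) / 2
    have hlen : ∀ p ∈ T, volume (Ioo (p.1.1 : ℝ) (p.1.2 : ℝ)) ≤ volume (S ∩ Ioo (p.1.1 : ℝ) (p.1.2 : ℝ)) / t := by
      intro p hp
      rw [ENNReal.le_div_iff_mul_le (Or.inl h0) (Or.inl h1), mul_comm]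
      exact hp
    have hr : ∀ p ∈ T, r p ≤ (volume S / t).toReal := by
      intro p hp
      have hlt : (p.1.1 : ℝ) < p.1.2 := by exact_mod_cast p.2
      have h2 : volume (Ioo (p.1.1 : ℝ) (p.1.2 : ℝ)) ≤ volume S / t :=
        (hlen p hp).trans (by gcongr; exact inter_subset_left)
      rw [Real.volume_Ioo, ENNReal.ofReal_le_iff_le_toReal (ENNReal.div_ne_top hSt h0)] at h2
      simp only [r]; linarith
    obtain ⟨u, huT, hdisj, hcov⟩ :=
      Vitali.exists_disjoint_subfamily_covering_enlargement_closedBall T c r _ hr 5 (by norm_num)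
    have hball : ∀ p : {p : ℚ × ℚ // p.1 < p.2},
        Ioo (p.1.1 : ℝ) (p.1.2 : ℝ) ⊆ Metric.closedBall (c p) (r p) := by
      intro p x hx
      rw [Metric.mem_closedBall, Real.dist_eq, abs_le]
      simp only [c, r]
      constructor <;> linarith [hx.1, hx.2]
    have hu : u.Countable := to_countable u
    calc volume (⋃ Q ∈ _, Q) ≤ volume (⋃ p ∈ u, Metric.closedBall (c p) (5 * r p)) := by
          apply measure_mono
          refine iUnion₂_subset ?_
          rintro _ ⟨⟨p, rfl⟩, hp⟩ x hx
          obtain ⟨b, hb, hb2⟩ := hcov p hp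
          exact mem_biUnion hb (hb2 (hball p hx))
      _ ≤ ∑' p : u, volume (Metric.closedBall (c p) (5 * r p)) := measure_biUnion_le _ hu _
      _ ≤ ∑' p : u, 5 / t * volume (S ∩ Ioo (p.1.1.1 : ℝ) (p.1.1.2 : ℝ)) := by
          refine ENNReal.tsum_le_tsum fun p => ?_
          have h3 : volume (Metric.closedBall (c p) (5 * r p)) =
              5 * volume (Ioo (p.1.1.1 : ℝ) (p.1.1.2 : ℝ)) := by
            rw [Real.volume_closedBall, Real.volume_Ioo]
            have : (5 : ENNReal) = ENNReal.ofReal 5 := by simp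
            rw [this, ← ENNReal.ofReal_mul (by norm_num)]
            congr 1
            simp only [r]; ring
          rw [h3]
          calc _ ≤ 5 * (volume (S ∩ Ioo (p.1.1.1 : ℝ) (p.1.1.2 : ℝ)) / t) := by
                gcongr; exact hlen _ (huT p.2)
            _ = _ := by simp only [div_eq_mul_inv]; ring
      _ = 5 / t * ∑' p : u, volume (S ∩ Ioo (p.1.1.1 : ℝ) (p.1.1.2 : ℝ)) := ENNReal.tsum_mul_left
      _ ≤ 5 / t * volume S := by
          gcongr
          refine (tsum_meas_le_meas_iUnion_of_disjoint _ (fun p => hS.inter measurableSet_Ioo) ?_).trans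
            (measure_mono (iUnion_subset fun p => inter_subset_left))
          intro p q hpq
          have := hdisj p.2 q.2 (fun h => hpq (Subtype.ext h))
          exact this.mono (inter_subset_right.trans (hball _)) (inter_subset_right.trans (hball _))

/-- Boxes with rational vertices. -/
def ratBoxes (n : ℕ) : Set (Set (Fin n → ℝ)) :=
  {Q | ∃ a b : Fin n → ℚ, (∀ i, a i < b i) ∧ Q = univ.pi fun i => Ioo (a i : ℝ) (b i : ℝ)}

lemma goodB_boxes (n : ℕ) : GoodB (volume : Measure (Fin n → ℝ)) (ratBoxes n) := by
  induction n with
  | zero =>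
    have hQ : ∀ Q ∈ ratBoxes 0, Q = univ := by
      rintro _ ⟨a, b, -, rfl⟩
      ext x; simp
    have hv : volume (univ : Set (Fin 0 → ℝ)) = 1 := by
      simp [volume_pi, Measure.pi_of_empty]
    refine ⟨(countable_singleton univ).mono hQ, ?_, ?_, ?_, ?_⟩
    · intro Q h; rw [hQ Q h]; exact MeasurableSet.univ
    · intro Q h; rw [hQ Q h, hv]; simp
    · intro Q h; rw [hQ Q h, hv]; simp
    · intro t h0 h1
      refine ⟨t⁻¹, by simp [h0], fun S hS => ?_⟩
      by_cases he : t ≤ volume S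
      · calc _ ≤ volume (univ : Set (Fin 0 → ℝ)) := measure_mono (subset_univ _)
          _ = t⁻¹ * t := by rw [hv, ENNReal.inv_mul_cancel h0 h1]
          _ ≤ _ := by gcongr
      · have : (⋃ Q ∈ {Q ∈ ratBoxes 0 | t * volume Q ≤ volume (S ∩ Q)}, Q) = ∅ := by
          simp only [iUnion_eq_empty]
          rintro Q ⟨h, h'⟩
          rw [hQ Q h, hv] at h'
          simp at h'
          exact absurd h' he
        rw [this]; simp
  | succ n ih =>
    refine (goodB_prod goodB_one ih).transport
      (MeasurableEquiv.piFinSuccAbove (fun _ : Fin (n + 1) => ℝ) 0)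
      (volume_preserving_piFinSuccAbove (fun _ : Fin (n + 1) => ℝ) 0) ?_
    rintro _ ⟨a, b, hab, rfl⟩
    refine ⟨_, ⟨_, ⟨⟨(a 0, b 0), hab 0⟩, rfl⟩, _, ⟨fun i => a i.succ, fun i => b i.succ,
      fun i => hab i.succ, rfl⟩, rfl⟩, ?_⟩
    ext x
    simp [MeasurableEquiv.piFinSuccAbove, Fin.insertNthEquiv, Fin.forall_fin_succ, Fin.removeNth,
      Fin.tail]

lemma maxGEd_bound (d : ℕ) (t : ENNReal) (h0 : t ≠ 0) (h1 : t ≠ ⊤) :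
    ∃ C : ENNReal, C ≠ ⊤ ∧ ∀ S : Set (Fin d → ℝ), MeasurableSet S →
      volume (maxGEd t S) ≤ C * volume S := by
  have ht0 : t / 2 ^ d ≠ 0 := by simp [h0]
  have ht1 : t / 2 ^ d ≠ ⊤ := ENNReal.div_ne_top h1 (by simp)
  obtain ⟨C, hC, H⟩ := (goodB_boxes d).wt _ ht0 ht1
  refine ⟨C, hC, fun S hS => le_trans (measure_mono ?_) (H S hS)⟩
  rintro x ⟨u, v, hx, hle⟩
  have hxi : ∀ i, u i < x i ∧ x i < v i := fun i => hx i (mem_univ i)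
  have hl : ∀ i, u i < v i := fun i => (hxi i).1.trans (hxi i).2
  have ha : ∀ i, ∃ a : ℚ, u i - (v i - u i) / 2 < a ∧ (a : ℝ) < u i := fun i =>
    exists_rat_btwn (by linarith [hl i])
  have hb : ∀ i, ∃ b : ℚ, v i < b ∧ (b : ℝ) < v i + (v i - u i) / 2 := fun i =>
    exists_rat_btwn (by linarith [hl i])
  choose a ha1 ha2 using ha
  choose b hb1 hb2 using hb
  have hsub : (univ.pi fun i => Ioo (u i) (v i)) ⊆ univ.pi fun i => Ioo (a i : ℝ) (b i : ℝ) :=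
    pi_mono fun i _ => Ioo_subset_Ioo (ha2 i).le (hb1 i).le
  refine mem_biUnion (x := univ.pi fun i => Ioo (a i : ℝ) (b i : ℝ)) ⟨⟨a, b, ?_, rfl⟩, ?_⟩ (hsub hx)
  · intro i
    have : (a i : ℝ) < b i := (ha2 i).trans ((hl i).trans (hb1 i))
    exact_mod_cast this
  · have hvol : volume (univ.pi fun i => Ioo (a i : ℝ) (b i : ℝ)) ≤
        2 ^ d * volume (univ.pi fun i => Ioo (u i) (v i)) := by
      rw [Real.volume_pi_Ioo, Real.volume_pi_Ioo]
      calc _ ≤ ∏ i, (2 * ENNReal.ofReal (v i - u i)) := by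
            refine Finset.prod_le_prod' fun i _ => ?_
            have : (2 : ENNReal) = ENNReal.ofReal 2 := by simp
            rw [this, ← ENNReal.ofReal_mul (by norm_num)]
            apply ENNReal.ofReal_le_ofReal
            linarith [ha1 i, hb2 i]
        _ = _ := by simp [Finset.prod_mul_distrib]
    calc _ ≤ t / 2 ^ d * (2 ^ d * volume (univ.pi fun i => Ioo (u i) (v i))) := by gcongr
      _ = t * volume (univ.pi fun i => Ioo (u i) (v i)) := by
          rw [← mul_assoc, ENNReal.div_mul_cancel (by simp) (by simp)]
      _ ≤ volume (S ∩ univ.pi fun i => Ioo (u i) (v i)) := hle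
      _ ≤ _ := measure_mono (inter_subset_inter_right _ hsub)

lemma measurable_rectD {d : ℕ} (R : RectD d) : MeasurableSet (rectD R) :=
  MeasurableSet.univ_pi fun _ => measurableSet_Ico

lemma measurable_Fset {d : ℕ} (U : Set (RectD d)) (i₀ : Fin d) (I : ℤ × ℤ) :
    MeasurableSet (Fset U i₀ I) :=
  MeasurableSet.biUnion (to_countable _) fun R _ => measurable_rectD R

lemma measurable_Gset {d : ℕ} (U : Set (RectD d)) (i₀ : Fin d) (I : ℤ × ℤ) :
    MeasurableSet (Gset U i₀ I) :=
  MeasurableSet.iUnion fun _ => MeasurableSet.iUnion fun _ => measurable_Fset _ _ _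

lemma measurable_Hset {d : ℕ} (U : Set (RectD d)) (i₀ : Fin d) (I : ℤ × ℤ) :
    MeasurableSet (Hset U i₀ I) := (measurable_Fset _ _ _).diff (measurable_Gset _ _ _)

lemma dI_ne {I J : ℤ × ℤ} (h : I ≠ J) : dI I.1 I.2 ≠ dI J.1 J.2 := by
  intro he
  apply h
  have p1 : (0 : ℝ) < 2 ^ I.2 := by positivity
  have p2 : (0 : ℝ) < 2 ^ J.2 := by positivity
  unfold dI at he
  rw [Set.Ico_eq_Ico_iff (Or.inl (by nlinarith))] at he
  have h2 : (2 : ℝ) ^ I.2 = 2 ^ J.2 := by linarith [he.1, he.2]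
  have h3 : I.2 = J.2 := zpow_right_injective₀ (by norm_num) (by norm_num) h2
  have h4 := he.1
  rw [h2] at h4
  have h5 : (I.1 : ℝ) = J.1 := mul_right_cancel₀ p2.ne' h4
  exact Prod.ext (by exact_mod_cast h5) h3

lemma dI_subset_s17 {I J : ℤ × ℤ} {x : ℝ} (hk : I.2 ≤ J.2) (hI : x ∈ dI I.1 I.2)
    (hJ : x ∈ dI J.1 J.2) : dI I.1 I.2 ⊆ dI J.1 J.2 := by
  obtain ⟨n, hn⟩ := Int.le.dest hk
  have p1 : (0 : ℝ) < 2 ^ I.2 := by positivity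
  have e : (2 : ℝ) ^ J.2 = 2 ^ n * 2 ^ I.2 := by
    rw [← hn, zpow_add₀ (by norm_num), zpow_natCast, mul_comm]
  unfold dI at *
  rw [e] at hJ ⊢
  obtain ⟨a1, a2⟩ := hI
  obtain ⟨b1, b2⟩ := hJ
  have c1 : ((J.1 * 2 ^ n : ℤ) : ℝ) < ((I.1 + 1 : ℤ) : ℝ) := by
    push_cast
    refine lt_of_mul_lt_mul_right ?_ p1.le
    linarith
  have c2 : ((I.1 : ℤ) : ℝ) < (((J.1 + 1) * 2 ^ n : ℤ) : ℝ) := by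
    push_cast
    refine lt_of_mul_lt_mul_right ?_ p1.le
    linarith
  have d1 : J.1 * 2 ^ n ≤ I.1 := Int.lt_add_one_iff.1 (by exact_mod_cast c1)
  have d2 : I.1 + 1 ≤ (J.1 + 1) * 2 ^ n := by exact_mod_cast c2
  have f1 : (J.1 : ℝ) * 2 ^ n ≤ I.1 := by exact_mod_cast d1
  have f2 : (I.1 : ℝ) + 1 ≤ (J.1 + 1) * 2 ^ n := by exact_mod_cast d2
  apply Set.Ico_subset_Ico
  · nlinarith
  · nlinarith

lemma mem_Fset_coord {d : ℕ} {U : Set (RectD d)} {i₀ : Fin d} {I : ℤ × ℤ} {x : Fin d → ℝ}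
    (h : x ∈ Fset U i₀ I) : x i₀ ∈ dI I.1 I.2 := by
  simp only [Fset, mem_iUnion, mem_setOf_eq, exists_prop] at h
  obtain ⟨R, ⟨-, rfl⟩, hx⟩ := h
  exact hx i₀ (mem_univ _)

lemma Hset_disj_aux {d : ℕ} {U : Set (RectD d)} {i₀ : Fin d} {I J : ℤ × ℤ} {x : Fin d → ℝ}
    (hne : I ≠ J) (hk : I.2 ≤ J.2) (h1 : x ∈ Hset U i₀ I) (h2 : x ∈ Hset U i₀ J) : False := by
  apply h1.2
  simp only [Gset, mem_iUnion, exists_prop]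
  exact ⟨J, (dI_subset_s17 hk (mem_Fset_coord h1.1) (mem_Fset_coord h2.1)).ssubset_of_ne (dI_ne hne),
    h2.1⟩

lemma rectD_ae {d : ℕ} (R : RectD d) : rectD R =ᵐ[volume]
    univ.pi fun i => Ioo (((R i).1 : ℝ) * 2 ^ (R i).2) ((((R i).1 : ℝ) + 1) * 2 ^ (R i).2) :=
  Measure.univ_pi_Ico_ae_eq_Icc.trans Measure.univ_pi_Ioo_ae_eq_Icc.symm

/-- Pipher's covering lemma, key disjointness construction: with `i₀` the
first coordinate, if every `R ∈ 𝓤'` satisfies `|R ∩ G(R_{(1)})| < ¾|R|`, then the sets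
`H(I)` are pairwise disjoint, every `R ∈ 𝓤'` satisfies `|R ∩ H(R_{(1)})| ≥ ¼|R|`, and
`|F(I)| ≤ |{M 1_{H(I)} ≥ ¼}| ≤ C_d |H(I)|`. -/
theorem stmt_17 (d : ℕ) (hd : 2 ≤ d) (i₀ : Fin d) (hi₀ : (i₀ : ℕ) = 0) :
    ∃ C : ℝ, 0 < C ∧ ∀ 𝓤' : Set (RectD d),
      (∀ R ∈ 𝓤', volume (rectD R ∩ Gset 𝓤' i₀ (R i₀)) < (3/4 : ENNReal) * volume (rectD R)) →
      ((∀ I₁ I₂ : ℤ × ℤ, I₁ ≠ I₂ → Hset 𝓤' i₀ I₁ ∩ Hset 𝓤' i₀ I₂ = ∅) ∧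
       (∀ R ∈ 𝓤', (1/4 : ENNReal) * volume (rectD R) ≤ volume (rectD R ∩ Hset 𝓤' i₀ (R i₀))) ∧
       (∀ I : ℤ × ℤ,
          volume (Fset 𝓤' i₀ I) ≤ volume (maxGEd (1/4 : ENNReal) (Hset 𝓤' i₀ I)) ∧
          volume (maxGEd (1/4 : ENNReal) (Hset 𝓤' i₀ I))
            ≤ ENNReal.ofReal C * volume (Hset 𝓤' i₀ I))) := by
  obtain ⟨C, hC, hM⟩ := maxGEd_bound d (1/4) (by simp) (by simp)
  refine ⟨C.toReal + 1, by positivity, fun 𝓤' hU => ?_⟩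
  have h2 : ∀ R ∈ 𝓤', (1/4 : ENNReal) * volume (rectD R) ≤
      volume (rectD R ∩ Hset 𝓤' i₀ (R i₀)) := by
    intro R hR
    have hsub : rectD R ⊆ Fset 𝓤' i₀ (R i₀) := subset_biUnion_of_mem (u := rectD)
      (show R ∈ {S ∈ 𝓤' | S i₀ = R i₀} from ⟨hR, rfl⟩)
    have e : rectD R ∩ Hset 𝓤' i₀ (R i₀) = rectD R \ Gset 𝓤' i₀ (R i₀) := by
      ext x
      exact ⟨fun h => ⟨h.1, h.2.2⟩, fun h => ⟨h.1, hsub h.1, h.2⟩⟩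
    rw [e]
    have hlt := hU R hR
    have hs := measure_inter_add_diff (μ := volume) (rectD R) (measurable_Gset 𝓤' i₀ (R i₀))
    have hq : (3/4 : ENNReal) * volume (rectD R) + 1/4 * volume (rectD R) = volume (rectD R) := by
      rw [← add_mul, ENNReal.div_add_div_same]
      norm_num
      rw [ENNReal.div_self (by simp) (by simp), one_mul]
    by_contra hcon
    have := ENNReal.add_lt_add hlt (not_le.mp hcon)
    rw [hs, hq] at this
    exact lt_irrefl _ this
  refine ⟨?_, h2, fun I => ⟨?_, ?_⟩⟩
  · intro I J hne
    rw [eq_empty_iff_forall_notMem]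
    rintro x ⟨h1, h2⟩
    rcases le_total I.2 J.2 with hk | hk
    · exact Hset_disj_aux hne hk h1 h2
    · exact Hset_disj_aux hne.symm hk h2 h1
  · have hae : Fset 𝓤' i₀ I =ᵐ[volume] ⋃ R ∈ {R ∈ 𝓤' | R i₀ = I}, univ.pi fun i =>
        Ioo (((R i).1 : ℝ) * 2 ^ (R i).2) ((((R i).1 : ℝ) + 1) * 2 ^ (R i).2) :=
      Filter.EventuallyEq.countable_bUnion (to_countable _) fun R _ => rectD_ae R
    rw [measure_congr hae]
    apply measure_mono
    refine iUnion₂_subset ?_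
    rintro R ⟨hR, rfl⟩ x hx
    refine ⟨_, _, hx, ?_⟩
    have := h2 R hR
    rw [inter_comm, measure_congr (rectD_ae R),
      measure_congr ((Filter.EventuallyEq.refl _ (Hset 𝓤' i₀ (R i₀))).inter (rectD_ae R))] at this
    exact this
  · refine (hM _ (measurable_Hset _ _ _)).trans ?_
    gcongr
    rw [ENNReal.le_ofReal_iff_toReal_le hC (by positivity)]
    linarith
end
end
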